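/- Let γ > 0, a_n = n^{−γ}, and E = {e^{i a_n} : n ≥ 1} ∪ {e^{−i a_n} : n ≥ 1} ∪ {1}. Then E is an 𝓛₂-set but E is not a 𝒦-set; in particular the class of 𝓛₂-sets is strictly larger than the class of 𝒦-sets. -/

import Mathlib

open MeasureTheory Real Set

noncomputable section

/-- The unit circle in `ℂ`. -/
def circleT : Set ℂ := Metric.sphere (0 : ℂ) 1

/-- Arc-length parametrization of the unit circle. -/
def cpt (θ : ℝ) : ℂ := Complex.exp (θ * Complex.I)

/-- Distance from a point to a set. -/
def dE (E : Set ℂ) (ζ : ℂ) : ℝ := Metric.infDist ζ E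

/-- Arc-length integral over the whole circle. -/
def circInt (f : ℂ → ℝ) : ℝ := ∫ θ in Set.Ioc 0 (2 * π), f (cpt θ)

/-- Arc-length integral over a subset `Λ` of the circle. -/
def circIntOn (Λ : Set ℂ) (f : ℂ → ℝ) : ℝ :=
  ∫ θ in {θ ∈ Set.Ioc 0 (2 * π) | cpt θ ∈ Λ}, f (cpt θ)

/-- `E` has arc-length (Lebesgue) measure zero. -/
def MeasureZeroOnCircle (E : Set ℂ) : Prop :=
  volume {θ ∈ Set.Ioc 0 (2 * π) | cpt θ ∈ E} = 0

/-- `E` is a Carleson set: `∫_𝕋 log dist(ζ,E) |dζ| > -∞`. -/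
def CarlesonSet (E : Set ℂ) : Prop :=
  IntegrableOn (fun θ => Real.log (dE E (cpt θ))) (Set.Ioc 0 (2 * π)) volume

/-- `I(ζ,E)`: the connected component of `𝕋 \ E` containing `ζ`. -/
def compArc (E : Set ℂ) (ζ : ℂ) : Set ℂ := connectedComponentIn (circleT \ E) ζ

/-- `Γ(ζ,E)`. -/
def GammaSet (E : Set ℂ) (ζ : ℂ) : Set ℂ :=
  {ζ' ∈ circleT \ compArc E ζ | dE E ζ' ≤ dE E ζ}

/-- `Σ(ζ,E)`. -/
def SigmaSet (E : Set ℂ) (ζ : ℂ) : Set ℂ :=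
  {ζ' ∈ circleT \ compArc E ζ | dE E ζ ≤ dE E ζ'}

/-- The Richter–Sundberg integrand for the outer function with boundary modulus
`ω(dist(·,E))`. -/
def RSker (ω : ℝ → ℝ) (E : Set ℂ) (ζ ζ' : ℂ) : ℝ :=
  ((ω (dE E ζ')) ^ 2 - (ω (dE E ζ)) ^ 2
    - 2 * (ω (dE E ζ)) ^ 2 * Real.log (ω (dE E ζ') / ω (dE E ζ))) / ‖ζ - ζ'‖ ^ 2

/-- Local Dirichlet integral `D_ζ(f_{ω,E})` (Richter–Sundberg formula). -/
def locDir (ω : ℝ → ℝ) (E : Set ℂ) (ζ : ℂ) : ℝ :=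
  (1 / (2 * π)) * circInt (fun ζ' => RSker ω E ζ ζ')

/-- Local Dirichlet integral restricted to `Λ`. -/
def locDirOn (ω : ℝ → ℝ) (E : Set ℂ) (Λ : Set ℂ) (ζ : ℂ) : ℝ :=
  (1 / (2 * π)) * circIntOn Λ (fun ζ' => RSker ω E ζ ζ')

/-- `E` is an `𝓛₁`-set. -/
def L1Set (E : Set ℂ) : Prop :=
  ∃ C > 0, ∀ ζ ∈ circleT \ E,
    circIntOn (GammaSet E ζ)
      (fun ζ' => Real.log (dE E ζ / dE E ζ') / ‖ζ - ζ'‖ ^ 2) ≤ C / dE E ζ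

/-- The `𝓛₂` inequality with constant `C`. -/
def L2With (E : Set ℂ) (C : ℝ) : Prop :=
  ∀ ζ ∈ circleT \ E,
    circIntOn (GammaSet E ζ)
      (fun ζ' => (Real.log (dE E ζ / dE E ζ')) ^ 2 / ‖ζ - ζ'‖ ^ 2) ≤ C / dE E ζ

/-- `E` is an `𝓛₂`-set. -/
def L2Set (E : Set ℂ) : Prop := ∃ C > 0, L2With E C

/-- Supremum of `dist(·,E)` over the arc `cpt '' (a,b]`. -/
def arcSup (E : Set ℂ) (a b : ℝ) : ℝ := sSup ((fun θ => dE E (cpt θ)) '' Set.Ioc a b)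

/-- `E` is a `𝒦`-set (Kotochigov). -/
def KSet (E : Set ℂ) : Prop :=
  ∃ c > 0, ∀ a b : ℝ, a < b → b ≤ a + 2 * π → c * (b - a) ≤ arcSup E a b

/-- Integral of a weight over the arc `cpt '' (a,b]` (with respect to arc length). -/
def arcInt (w : ℂ → ℝ) (a b : ℝ) : ℝ := ∫ θ in Set.Ioc a b, w (cpt θ)

/-- Double logarithmic integral of a weight over an arc. -/
def arcDouble (w : ℂ → ℝ) (a b : ℝ) : ℝ :=
  ∫ θ in Set.Ioc a b, (∫ θ' in Set.Ioc a b,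
    Real.log (1 / ‖cpt θ - cpt θ'‖) * w (cpt θ) * w (cpt θ'))

/-- Arc-length measure of `{ζ ∈ I : dist(ζ,E) ≤ t}` for the arc `cpt '' (a,b]`. -/
def sublevelMeas (E : Set ℂ) (a b t : ℝ) : ℝ :=
  (volume {θ ∈ Set.Ioc a b | dE E (cpt θ) ≤ t}).toReal

/-- Arc-length measure of `E_t = {ζ ∈ 𝕋 : dist(ζ,E) ≤ t}`. -/
def EtMeas (E : Set ℂ) (t : ℝ) : ℝ := sublevelMeas E 0 (2 * π) t

/-- The open unit disc. -/
def unitDisc : Set ℂ := Metric.ball (0 : ℂ) 1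

/-- Membership in the (holomorphic) Dirichlet space `𝒟`. -/
def MemDirichlet (f : ℂ → ℂ) : Prop :=
  DifferentiableOn ℂ f unitDisc ∧
  (∃ M : ℝ, ∀ r ∈ Set.Ioo (0 : ℝ) 1,
    (∫ θ in Set.Ioc 0 (2 * π), ‖f ((r : ℂ) * cpt θ)‖ ^ 2) ≤ M) ∧
  IntegrableOn (fun z => ‖deriv f z‖ ^ 2) unitDisc volume

/-- `f` is a multiplier of the Dirichlet space `𝒟`. -/
def IsMultiplierD (f : ℂ → ℂ) : Prop :=
  ∀ g : ℂ → ℂ, MemDirichlet g → MemDirichlet (fun z => f z * g z)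

/-- The outer function `f_{ω,E}` with boundary modulus `ω(dist(·,E))`. -/
def outerFun (ω : ℝ → ℝ) (E : Set ℂ) (z : ℂ) : ℂ :=
  Complex.exp ((((2 * π)⁻¹ : ℝ) : ℂ) * ∫ θ in Set.Ioc 0 (2 * π),
    ((cpt θ + z) / (cpt θ - z)) * ((Real.log (ω (dE E (cpt θ))) : ℝ) : ℂ))

/-- `log ω(dist(·,E)) ∈ L¹(𝕋)`. -/
def LogOmegaInt (ω : ℝ → ℝ) (E : Set ℂ) : Prop :=
  IntegrableOn (fun θ => Real.log (ω (dE E (cpt θ)))) (Set.Ioc 0 (2 * π)) volume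

/-- Standing hypotheses on `ω` (with derivative `ω'`): continuous, positive, increasing on
`(0,π]`, differentiable with derivative `ω'`, `t ↦ ω(t^γ)` concave, and `t ↦ tω'(t)/ω(t)`
increasing. -/
def OmegaHyp (ω ω' : ℝ → ℝ) (γ : ℝ) : Prop :=
  ContinuousOn ω (Set.Ioc 0 π) ∧
  (∀ t ∈ Set.Ioc (0 : ℝ) π, 0 < ω t) ∧
  MonotoneOn ω (Set.Ioc 0 π) ∧
  (∀ t ∈ Set.Ioo (0 : ℝ) π, HasDerivAt ω (ω' t) t) ∧
  ConcaveOn ℝ (Set.Ioc 0 (π ^ γ⁻¹)) (fun t => ω (t ^ γ)) ∧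
  MonotoneOn (fun t => t * ω' t / ω t) (Set.Ioo 0 π)

/-- The generalized Cantor set `E_{(ζ_n)}` (with `ξ k` playing the role of `ζ_{k+1}`). -/
def gCantorSet (ξ : ℕ → ℝ) : Set ℂ :=
  {z | ∃ ε : ℕ → Bool, z = Complex.exp (((2 * π : ℝ) : ℂ) * Complex.I *
    ((∑' n : ℕ, (if ε n then (1 : ℝ) else 0) * (∏ k ∈ Finset.range n, ξ k) * (1 - ξ n) : ℝ) : ℂ))}

end

/-! ### Integral estimates on the line -/

lemma lintegral_rpow_Ioc {ε ρ : ℝ} (hε : ε < 1) (hρ : 0 ≤ ρ) :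
    ∫⁻ x in Ioc 0 ρ, ENNReal.ofReal (x ^ (-ε)) = ENNReal.ofReal (ρ ^ (1 - ε) / (1 - ε)) := by
  have hi : IntervalIntegrable (fun x : ℝ => x ^ (-ε)) volume 0 ρ :=
    intervalIntegral.intervalIntegrable_rpow' (by linarith)
  rw [intervalIntegrable_iff_integrableOn_Ioc_of_le hρ] at hi
  rw [← ofReal_integral_eq_lintegral_ofReal hi, ← intervalIntegral.integral_of_le hρ,
    integral_rpow (Or.inl (by linarith))]
  · congr 1
    rw [Real.zero_rpow (by linarith), sub_zero]
    congr 1 <;> ring_nf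
  · filter_upwards [ae_restrict_mem measurableSet_Ioc] with x hx
    exact Real.rpow_nonneg hx.1.le _

lemma lintegral_abs_sub_rpow_le {ε ρ : ℝ} (p : ℝ) (hε0 : 0 < ε) (hε : ε < 1) (hρ : 0 ≤ ρ) :
    ∫⁻ x in {x : ℝ | |x - p| ≤ ρ}, ENNReal.ofReal (|x - p| ^ (-ε)) ≤
      ENNReal.ofReal (2 * (ρ ^ (1 - ε) / (1 - ε))) := by
  set g : ℝ → ENNReal := (Ioc 0 ρ).indicator (fun x => ENNReal.ofReal (x ^ (-ε))) with hg
  have hgm : Measurable g := by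
    apply Measurable.indicator _ measurableSet_Ioc
    fun_prop
  have hm : MeasurableSet {x : ℝ | |x - p| ≤ ρ} :=
    (isClosed_le (by fun_prop) (by fun_prop)).measurableSet
  have hgi : ∫⁻ x, g x = ENNReal.ofReal (ρ ^ (1 - ε) / (1 - ε)) := by
    rw [hg, lintegral_indicator measurableSet_Ioc, lintegral_rpow_Ioc hε hρ]
  calc ∫⁻ x in {x : ℝ | |x - p| ≤ ρ}, ENNReal.ofReal (|x - p| ^ (-ε))
      ≤ ∫⁻ x, (g (x - p) + g (p - x)) := by
        rw [← lintegral_indicator hm]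
        refine lintegral_mono fun x => ?_
        by_cases hx : x ∈ {x : ℝ | |x - p| ≤ ρ}
        · rw [indicator_of_mem hx]
          have hx' : |x - p| ≤ ρ := hx
          rcases lt_trichotomy (x - p) 0 with h | h | h
          · have : g (p - x) = ENNReal.ofReal (|x - p| ^ (-ε)) := by
              rw [abs_of_neg h] at hx' ⊢
              rw [hg, indicator_of_mem (show p - x ∈ Ioc 0 ρ from ⟨by linarith, by linarith⟩)]
              congr 2; ring
            rw [this]; exact le_add_self
          · rw [h, abs_zero, Real.zero_rpow (by linarith)]; simp
          · have : g (x - p) = ENNReal.ofReal (|x - p| ^ (-ε)) := by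
              rw [abs_of_pos h] at hx' ⊢
              rw [hg, indicator_of_mem (show x - p ∈ Ioc 0 ρ from ⟨by linarith, by linarith⟩)]
            rw [this]; exact le_self_add
        · rw [indicator_of_notMem hx]; exact zero_le
    _ = ENNReal.ofReal (2 * (ρ ^ (1 - ε) / (1 - ε))) := by
        rw [lintegral_add_left (by fun_prop), lintegral_sub_right_eq_self g p,
          lintegral_sub_left_eq_self g p, hgi, ← two_mul,
          ENNReal.ofReal_mul (by norm_num)]
        simp

lemma lintegral_kernel (τ t : ℝ) (hτ : 0 < τ) :
    ∫⁻ s, ENNReal.ofReal ((τ ^ 2 + (s - t) ^ 2)⁻¹) = ENNReal.ofReal (π / τ) := by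
  rw [lintegral_sub_right_eq_self (fun x => ENNReal.ofReal ((τ ^ 2 + x ^ 2)⁻¹)) t]
  have h2 : ∀ s : ℝ, (τ ^ 2 + s ^ 2)⁻¹ = (τ ^ 2)⁻¹ * (1 + (s / τ) ^ 2)⁻¹ := by
    intro s; rw [← mul_inv]; congr 1; field_simp
  have hi : Integrable (fun s : ℝ => (τ ^ 2)⁻¹ * (1 + (s / τ) ^ 2)⁻¹) :=
    (integrable_inv_one_add_sq.comp_div hτ.ne').const_mul _
  simp_rw [h2]
  rw [← ofReal_integral_eq_lintegral_ofReal hi (ae_of_all _ fun x => by positivity),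
    integral_const_mul, Measure.integral_comp_div (fun x : ℝ => (1 + x ^ 2)⁻¹),
    integral_univ_inv_one_add_sq, abs_of_pos hτ]
  congr 1
  simp only [smul_eq_mul]
  field_simp

/-- If `K` varies by a bounded factor at scale `τ`, then averaging a power of the distance to `p`
against `K` over `J` costs no more than its value at scale `min τ ℓ`. -/
lemma lintegral_rpow_mul_kernel_le {ε τ ℓ p A : ℝ} (hε0 : 0 < ε) (hε : ε < 1) (hτ : 0 < τ)
    (hℓ : 0 < ℓ) {J : Set ℝ} (hJ : MeasurableSet J) {K : ℝ → ℝ} (hK : Measurable K)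
    (hK0 : ∀ s, 0 ≤ K s)
    (hA : 0 ≤ A) (hKd : ∀ s s', |s - s'| ≤ 2 * τ → K s ≤ A * K s')
    (hvol : ∀ ρ, 0 ≤ ρ → ρ ≤ ℓ →
      ENNReal.ofReal ρ ≤ volume (J ∩ {x : ℝ | |x - p| ≤ ρ})) :
    ∫⁻ s in J, ENNReal.ofReal (|s - p| ^ (-ε) * K s) ≤
      ENNReal.ofReal ((1 + 2 * A / (1 - ε)) * (τ ^ (-ε) + ℓ ^ (-ε))) *
        ∫⁻ s in J, ENNReal.ofReal (K s) := by
  set ρ := min τ ℓ with hρ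
  have hρ0 : 0 < ρ := lt_min hτ hℓ
  set B := {x : ℝ | |x - p| ≤ ρ} with hB
  have hBm : MeasurableSet B := (isClosed_le (by fun_prop) (by fun_prop)).measurableSet
  set M := τ ^ (-ε) + ℓ ^ (-ε) with hM
  have hρM : ρ ^ (-ε) ≤ M := by
    have h1 := Real.rpow_nonneg hτ.le (-ε)
    have h2 := Real.rpow_nonneg hℓ.le (-ε)
    rcases min_choice τ ℓ with h | h <;> rw [hρ, h, hM] <;> linarith
  have hM0 : 0 ≤ M := le_trans (Real.rpow_nonneg hρ0.le _) hρM
  have h1ε : 0 < 1 - ε := by linarith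
  have hfar : ∫⁻ s in J \ B, ENNReal.ofReal (|s - p| ^ (-ε) * K s) ≤
      ENNReal.ofReal M * ∫⁻ s in J, ENNReal.ofReal (K s) := by
    rw [← lintegral_const_mul _ (by fun_prop)]
    refine le_trans (setLIntegral_mono' (hJ.diff hBm) ?_) (lintegral_mono_set sdiff_subset)
    intro s hs
    rw [← ENNReal.ofReal_mul hM0]
    apply ENNReal.ofReal_le_ofReal
    apply mul_le_mul_of_nonneg_right _ (hK0 s)
    have : ρ < |s - p| := not_le.mp hs.2
    exact le_trans (Real.rpow_le_rpow_of_nonpos hρ0 this.le (by linarith)) hρM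
  have hnear : ∫⁻ s in J ∩ B, ENNReal.ofReal (|s - p| ^ (-ε) * K s) ≤
      ENNReal.ofReal ((2 * A / (1 - ε)) * M) * ∫⁻ s in J, ENNReal.ofReal (K s) := by
    set κ := ∫⁻ s in J ∩ B, ENNReal.ofReal (K s) with hκ
    have hpt : ∀ s ∈ J ∩ B, ENNReal.ofReal (K s) * ENNReal.ofReal ρ ≤ ENNReal.ofReal A * κ := by
      intro s hs
      calc ENNReal.ofReal (K s) * ENNReal.ofReal ρ
          ≤ ENNReal.ofReal (K s) * volume (J ∩ B) := by
            gcongr; exact hvol ρ hρ0.le (min_le_right _ _)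
        _ = ∫⁻ _ in J ∩ B, ENNReal.ofReal (K s) := by simp
        _ ≤ ∫⁻ s' in J ∩ B, ENNReal.ofReal A * ENNReal.ofReal (K s') := by
            refine setLIntegral_mono' (hJ.inter hBm) fun s' hs' => ?_
            rw [← ENNReal.ofReal_mul hA]
            apply ENNReal.ofReal_le_ofReal
            apply hKd
            have e1 : |s - p| ≤ ρ := hs.2
            have e2 : |s' - p| ≤ ρ := hs'.2
            have e3 : ρ ≤ τ := min_le_left _ _
            rw [abs_le] at *
            constructor <;> linarith
        _ = ENNReal.ofReal A * κ := lintegral_const_mul _ (by fun_prop)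
    have hpt' : ∀ s ∈ J ∩ B, ENNReal.ofReal (K s) ≤ ENNReal.ofReal (A / ρ) * κ := by
      intro s hs
      have h := hpt s hs
      rw [ENNReal.ofReal_div_of_pos hρ0, ← ENNReal.mul_div_right_comm,
        ENNReal.le_div_iff_mul_le (by simp [hρ0]) (by simp)]
      exact h
    calc ∫⁻ s in J ∩ B, ENNReal.ofReal (|s - p| ^ (-ε) * K s)
        ≤ ∫⁻ s in J ∩ B, ENNReal.ofReal (|s - p| ^ (-ε)) * (ENNReal.ofReal (A / ρ) * κ) := by
          refine setLIntegral_mono' (hJ.inter hBm) fun s hs => ?_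
          rw [ENNReal.ofReal_mul (by positivity)]
          gcongr
          exact hpt' s hs
      _ = (∫⁻ s in J ∩ B, ENNReal.ofReal (|s - p| ^ (-ε))) * (ENNReal.ofReal (A / ρ) * κ) :=
          lintegral_mul_const _ (by fun_prop)
      _ ≤ ENNReal.ofReal (2 * (ρ ^ (1 - ε) / (1 - ε))) * (ENNReal.ofReal (A / ρ) * κ) := by
          gcongr
          exact (lintegral_mono_set inter_subset_right).trans
            (lintegral_abs_sub_rpow_le p hε0 hε hρ0.le)
      _ = ENNReal.ofReal (2 * A / (1 - ε) * ρ ^ (-ε)) * κ := by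
          rw [← mul_assoc, ← ENNReal.ofReal_mul (by positivity)]
          congr 2
          rw [sub_eq_add_neg, Real.rpow_add hρ0, Real.rpow_one]
          field_simp
      _ ≤ ENNReal.ofReal ((2 * A / (1 - ε)) * M) * ∫⁻ s in J, ENNReal.ofReal (K s) := by
          gcongr
          exact lintegral_mono_set inter_subset_left
  rw [← lintegral_inter_add_sdiff _ J hBm]
  refine (add_le_add hnear hfar).trans (le_of_eq ?_)
  rw [← add_mul, ← ENNReal.ofReal_add (by positivity) hM0]
  congr 2
  ring

lemma lintegral_rpow_half_kernel_le {τ t : ℝ} (hτ : 0 < τ) (hτt : τ ≤ t) :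
    ∫⁻ s in Ioc 0 π, ENNReal.ofReal (s ^ (-(1 / 2) : ℝ) * (τ ^ 2 + (s - t) ^ 2)⁻¹) ≤
      ENNReal.ofReal (20 * t ^ (-(1 / 2) : ℝ) / τ) := by
  have ht : 0 < t := hτ.trans_le hτt
  set K : ℝ → ℝ := fun s => (τ ^ 2 + (s - t) ^ 2)⁻¹ with hK
  have hKm : Measurable K := by fun_prop
  have hsplit : Ioc (0 : ℝ) π ⊆ Ioc 0 (t / 2) ∪ Ioi (t / 2) := by
    intro s hs
    rcases le_or_gt s (t / 2) with h | h
    · exact Or.inl ⟨hs.1, h⟩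
    · exact Or.inr h
  have h1 : ∫⁻ s in Ioi (t / 2), ENNReal.ofReal (s ^ (-(1 / 2) : ℝ) * K s) ≤
      ENNReal.ofReal ((t / 2) ^ (-(1 / 2) : ℝ) * (π / τ)) := by
    rw [ENNReal.ofReal_mul (by positivity), ← lintegral_kernel τ t hτ,
      ← lintegral_const_mul _ (by fun_prop)]
    refine le_trans (setLIntegral_mono' measurableSet_Ioi ?_) (setLIntegral_le_lintegral _ _)
    intro s hs
    rw [← ENNReal.ofReal_mul (by positivity)]
    apply ENNReal.ofReal_le_ofReal
    have hs' : t / 2 < s := hs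
    have : s ^ (-(1 / 2) : ℝ) ≤ (t / 2) ^ (-(1 / 2) : ℝ) :=
      Real.rpow_le_rpow_of_nonpos (by positivity) hs'.le (by norm_num)
    gcongr
  have h2 : ∫⁻ s in Ioc 0 (t / 2), ENNReal.ofReal (s ^ (-(1 / 2) : ℝ) * K s) ≤
      ENNReal.ofReal (((t / 2) ^ (1 - 1 / 2 : ℝ) / (1 - 1 / 2)) * (4 / t ^ 2)) := by
    rw [ENNReal.ofReal_mul (by positivity),
      ← lintegral_rpow_Ioc (by norm_num : (1 / 2 : ℝ) < 1) (by positivity : (0 : ℝ) ≤ t / 2),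
      ← lintegral_mul_const _ (by fun_prop)]
    refine setLIntegral_mono' measurableSet_Ioc fun s hs => ?_
    have hs0 : 0 < s := hs.1
    rw [← ENNReal.ofReal_mul (by positivity)]
    apply ENNReal.ofReal_le_ofReal
    have : K s ≤ 4 / t ^ 2 := by
      rw [hK]
      simp only
      rw [inv_le_comm₀ (by positivity) (by positivity), inv_div]
      nlinarith [hs.2, sq_nonneg τ]
    gcongr
  refine (lintegral_mono_set hsplit).trans ((lintegral_union_le _ _ _).trans
    ((add_le_add h2 h1).trans ?_))
  rw [← ENNReal.ofReal_add (by positivity) (by positivity)]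
  apply ENNReal.ofReal_le_ofReal
  have e1 : (t / 2) ^ (1 - 1 / 2 : ℝ) = (t / 2) * (t / 2) ^ (-(1 / 2) : ℝ) := by
    rw [sub_eq_add_neg, Real.rpow_add (by positivity), Real.rpow_one]
  have e2 : (t / 2) ^ (-(1 / 2) : ℝ) ≤ 2 * t ^ (-(1 / 2) : ℝ) := by
    rw [Real.div_rpow ht.le (by norm_num), Real.rpow_neg (by norm_num : (0 : ℝ) ≤ 2), div_inv_eq_mul,
      mul_comm]
    gcongr
    calc (2 : ℝ) ^ (1 / 2 : ℝ) ≤ 2 ^ (1 : ℝ) :=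
          Real.rpow_le_rpow_of_exponent_le (by norm_num) (by norm_num)
      _ = 2 := Real.rpow_one 2
  set x := t ^ (-(1 / 2) : ℝ)
  have hx : 0 ≤ x := by positivity
  rw [e1]
  have e3 : (t / 2 * (t / 2) ^ (-(1 / 2) : ℝ)) / (1 - 1 / 2) * (4 / t ^ 2) =
      4 * (t / 2) ^ (-(1 / 2) : ℝ) / t := by
    field_simp; ring
  rw [e3]
  have e4 : 4 * (t / 2) ^ (-(1 / 2) : ℝ) / t ≤ 4 * (2 * x) / τ := by
    gcongr
  have e5 : (t / 2) ^ (-(1 / 2) : ℝ) * (π / τ) ≤ 2 * x * (4 / τ) := by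
    gcongr
    exact Real.pi_le_four
  calc _ ≤ 4 * (2 * x) / τ + 2 * x * (4 / τ) := add_le_add e4 e5
    _ = 16 * x / τ := by ring
    _ ≤ 20 * x / τ := by gcongr; norm_num

/-! ### Geometry of the circle -/

lemma norm_cpt_sub_cpt (x y : ℝ) : ‖cpt x - cpt y‖ = 2 * |Real.sin ((x - y) / 2)| := by
  have h : cpt x - cpt y = cpt y * (Complex.exp (Complex.I * ((x - y : ℝ) : ℂ)) - 1) := by
    unfold cpt
    rw [mul_sub, ← Complex.exp_add, mul_one]
    congr 2
    push_cast
    ring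
  rw [h, norm_mul, Complex.norm_exp_I_mul_ofReal_sub_one]
  unfold cpt
  rw [Complex.norm_exp_ofReal_mul_I, one_mul, Real.norm_eq_abs, abs_mul]
  norm_num

lemma norm_cpt_sub_cpt_le (x y : ℝ) : ‖cpt x - cpt y‖ ≤ |x - y| := by
  rw [norm_cpt_sub_cpt]
  have := Real.abs_sin_le_abs (x := (x - y) / 2)
  rw [abs_div, abs_two] at this
  linarith

lemma le_norm_cpt_sub_cpt {x y : ℝ} (h : |x - y| ≤ π) : 2 / π * |x - y| ≤ ‖cpt x - cpt y‖ := by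
  rw [norm_cpt_sub_cpt]
  have := Real.mul_abs_le_abs_sin (x := (x - y) / 2) (by rw [abs_div, abs_two]; linarith)
  rw [abs_div, abs_two] at this
  linarith

lemma norm_cpt_abs_sub_le {x y : ℝ} (hx : |x| ≤ π) (hy : |y| ≤ π) :
    ‖cpt |x| - cpt |y|‖ ≤ ‖cpt x - cpt y‖ := by
  have key : ∀ u v : ℝ, ‖cpt u - cpt v‖ ^ 2 = 2 - 2 * Real.cos (u - v) := by
    intro u v
    rw [norm_cpt_sub_cpt, mul_pow, sq_abs, Real.sin_sq_eq_half_sub]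
    ring_nf
  refine le_of_sq_le_sq ?_ (norm_nonneg _)
  rw [key, key, Real.cos_sub, Real.cos_sub, Real.cos_abs, Real.cos_abs]
  have h : ∀ u : ℝ, |u| ≤ π → Real.sin |u| = |Real.sin u| := fun u hu =>
    (Real.abs_sin_eq_sin_abs_of_abs_le_pi hu).symm
  rw [h x hx, h y hy, ← abs_mul]
  linarith [le_abs_self (Real.sin x * Real.sin y)]

lemma abs_abs_sub_abs_le_norm {x y : ℝ} (hx : |x| ≤ π) (hy : |y| ≤ π) :
    2 / π * |(|x| - |y|)| ≤ ‖cpt x - cpt y‖ := by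
  refine le_trans (le_norm_cpt_sub_cpt ?_) (norm_cpt_abs_sub_le hx hy)
  rw [abs_le]
  constructor <;> linarith [abs_nonneg x, abs_nonneg y]

lemma cpt_mem_circleT (x : ℝ) : cpt x ∈ circleT := by
  simp [circleT, cpt, Complex.norm_exp_ofReal_mul_I]

lemma exists_cpt_of_mem_circleT {z : ℂ} (hz : z ∈ circleT) : ∃ x : ℝ, |x| ≤ π ∧ cpt x = z := by
  refine ⟨z.arg, Complex.abs_arg_le_pi z, ?_⟩
  have h1 : ‖z‖ = 1 := by simpa [circleT] using hz
  have := Complex.norm_mul_exp_arg_mul_I z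
  rw [h1] at this
  simpa [cpt] using this

lemma cpt_sub_two_pi (x : ℝ) : cpt (x - 2 * π) = cpt x := by
  unfold cpt
  push_cast
  rw [sub_mul, Complex.exp_sub, Complex.exp_two_pi_mul_I, div_one]

lemma continuous_cpt : Continuous cpt := by
  unfold cpt; fun_prop

/-- Points of the circle close to `ζ` relative to `dist(ζ, E)` lie in the same component. -/
lemma mem_compArc_of_norm_lt {E : Set ℂ} {x y : ℝ}
    (h : ‖cpt x - cpt y‖ < 2 / π * dE E (cpt x)) : cpt y ∈ compArc E (cpt x) := by
  obtain ⟨z, hz, hzy⟩ : ∃ z : ℝ, |x - z| ≤ π ∧ cpt z = cpt y := by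
    obtain ⟨w, hw, hwe⟩ := exists_cpt_of_mem_circleT (cpt_mem_circleT (y - x))
    refine ⟨x + w, by simpa using hw, ?_⟩
    have : cpt (x + w) = cpt x * cpt w := by
      unfold cpt; rw [← Complex.exp_add]; congr 1; push_cast; ring
    rw [this, hwe]
    unfold cpt
    rw [← Complex.exp_add]; congr 1; push_cast; ring
  rw [← hzy] at h ⊢
  have hxz : |x - z| < dE E (cpt x) := by
    have h2 : 0 < 2 / π := by positivity
    exact lt_of_mul_lt_mul_left ((le_norm_cpt_sub_cpt hz).trans_lt h) h2.le
  have hsub : cpt '' (uIcc x z) ⊆ circleT \ E := by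
    rintro _ ⟨u, hu, rfl⟩
    refine ⟨cpt_mem_circleT u, fun huE => ?_⟩
    have h1 : dE E (cpt x) ≤ ‖cpt x - cpt u‖ := by
      rw [← dist_eq_norm]; exact Metric.infDist_le_dist_of_mem huE
    have h2 := norm_cpt_sub_cpt_le x u
    have h3 : |u - x| ≤ |z - x| := abs_sub_left_of_mem_uIcc hu
    rw [abs_sub_comm u, abs_sub_comm z] at h3
    linarith
  have hc : IsPreconnected (cpt '' (uIcc x z)) :=
    isPreconnected_uIcc.image _ continuous_cpt.continuousOn
  exact hc.subset_connectedComponentIn (mem_image_of_mem _ left_mem_uIcc) hsub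
    (mem_image_of_mem _ right_mem_uIcc)

/-! ### The sequence of break points -/

/-- The points `π, 1, 2^{-γ}, 3^{-γ}, …` cutting `(0, π]` into gaps. -/
noncomputable def breakPt (γ : ℝ) : ℕ → ℝ
  | 0 => π
  | n + 1 => ((n + 1 : ℕ) : ℝ) ^ (-γ)

lemma breakPt_pos (γ : ℝ) (n : ℕ) : 0 < breakPt γ n := by
  cases n with
  | zero => exact Real.pi_pos
  | succ n => exact Real.rpow_pos_of_pos (by positivity) _

lemma breakPt_succ_lt {γ : ℝ} (hγ : 0 < γ) (n : ℕ) : breakPt γ (n + 1) < breakPt γ n := by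
  cases n with
  | zero =>
    have : breakPt γ 1 = 1 := by simp [breakPt]
    rw [zero_add, this]
    exact lt_trans (by norm_num) Real.pi_gt_three
  | succ n =>
    apply Real.rpow_lt_rpow_of_neg (by positivity) _ (by linarith)
    push_cast; linarith

lemma antitone_breakPt {γ : ℝ} (hγ : 0 < γ) : Antitone (breakPt γ) :=
  antitone_nat_of_succ_le fun n => (breakPt_succ_lt hγ n).le

lemma breakPt_le_pi {γ : ℝ} (hγ : 0 < γ) (n : ℕ) : breakPt γ n ≤ π :=
  antitone_breakPt hγ (Nat.zero_le n)

lemma tendsto_breakPt {γ : ℝ} (hγ : 0 < γ) :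
    Filter.Tendsto (breakPt γ) Filter.atTop (nhds 0) := by
  rw [← Filter.tendsto_add_atTop_iff_nat 1]
  exact (tendsto_rpow_neg_atTop hγ).comp
    (tendsto_natCast_atTop_atTop.comp (Filter.tendsto_add_atTop_nat 1))

lemma exists_mem_Ioc_breakPt {γ : ℝ} (hγ : 0 < γ) {N : ℕ} {s : ℝ} (hs : 0 < s)
    (hsN : s ≤ breakPt γ N) : ∃ n, N ≤ n ∧ s ∈ Ioc (breakPt γ (n + 1)) (breakPt γ n) := by
  have hex : ∃ k, breakPt γ k < s := ((tendsto_breakPt hγ).eventually_lt_const hs).exists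
  classical
  have h1 := Nat.find_spec hex
  have hN : N < Nat.find hex := by
    by_contra hcon
    have := antitone_breakPt hγ (not_lt.mp hcon)
    linarith
  obtain ⟨m, hm⟩ : ∃ m, Nat.find hex = m + 1 := ⟨Nat.find hex - 1, by omega⟩
  refine ⟨m, by omega, hm ▸ h1, ?_⟩
  exact not_lt.mp (Nat.find_min hex (by omega : m < Nat.find hex))

lemma iUnion_Ioc_breakPt {γ : ℝ} (hγ : 0 < γ) :
    ⋃ n, Ioc (breakPt γ (n + 1)) (breakPt γ n) = Ioc 0 π := by
  ext s
  simp only [mem_iUnion]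
  constructor
  · rintro ⟨n, hn⟩
    exact ⟨(breakPt_pos γ _).trans hn.1, hn.2.trans (breakPt_le_pi hγ n)⟩
  · intro hs
    obtain ⟨n, -, hn⟩ := exists_mem_Ioc_breakPt hγ (N := 0) hs.1 hs.2
    exact ⟨n, hn⟩

lemma rpow_neg_sub_bounds {γ x : ℝ} (hγ : 0 < γ) (hx : 0 < x) :
    γ * (x + 1) ^ (-γ - 1) ≤ x ^ (-γ) - (x + 1) ^ (-γ) ∧
      x ^ (-γ) - (x + 1) ^ (-γ) ≤ γ * x ^ (-γ - 1) := by
  have hd : ∀ y ∈ Icc x (x + 1), HasDerivAt (fun y : ℝ => y ^ (-γ)) (-γ * y ^ (-γ - 1)) y :=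
    fun y hy => Real.hasDerivAt_rpow_const (Or.inl (hx.trans_le hy.1).ne')
  obtain ⟨c, hc, hce⟩ := exists_hasDerivAt_eq_slope (fun y : ℝ => y ^ (-γ))
    (fun y => -γ * y ^ (-γ - 1)) (by linarith : x < x + 1)
    (fun y hy => (hd y hy).continuousAt.continuousWithinAt)
    (fun y hy => hd y (Ioo_subset_Icc_self hy))
  have e : x ^ (-γ) - (x + 1) ^ (-γ) = γ * c ^ (-γ - 1) := by
    have : x + 1 - x = 1 := by ring
    rw [this, div_one] at hce
    linarith
  rw [e]
  have hc0 : 0 < c := hx.trans hc.1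
  constructor <;> apply mul_le_mul_of_nonneg_left _ hγ.le
  · exact Real.rpow_le_rpow_of_nonpos hc0 hc.2.le (by linarith)
  · exact Real.rpow_le_rpow_of_nonpos hx hc.1.le (by linarith)

lemma breakPt_succ_rpow {γ : ℝ} (hγ : 0 < γ) (n : ℕ) :
    breakPt γ (n + 1) ^ (1 + 1 / γ) = ((n : ℝ) + 1) ^ (-γ - 1) := by
  simp only [breakPt]
  rw [← Real.rpow_mul (by positivity)]
  push_cast
  congr 1
  field_simp
  ring

lemma exists_le_gap {γ : ℝ} (hγ : 0 < γ) :
    ∃ c > 0, ∀ n, c * breakPt γ n ^ (1 + 1 / γ) ≤ breakPt γ n - breakPt γ (n + 1) := by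
  refine ⟨min ((π - 1) / π ^ (1 + 1 / γ)) (γ * 2 ^ (-γ - 1)), ?_, ?_⟩
  · have : 0 < π - 1 := by linarith [Real.pi_gt_three]
    exact lt_min (by positivity) (by positivity)
  · intro n
    cases n with
    | zero =>
      have h1 : breakPt γ (0 + 1) = 1 := by simp [breakPt]
      have h0 : breakPt γ 0 = π := rfl
      rw [h1, h0]
      have hp : 0 < π ^ (1 + 1 / γ) := by positivity
      calc _ ≤ (π - 1) / π ^ (1 + 1 / γ) * π ^ (1 + 1 / γ) := by
            gcongr; exact min_le_left _ _
        _ = π - 1 := by field_simp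
    | succ n =>
      have hb := (rpow_neg_sub_bounds hγ (by positivity : (0 : ℝ) < (n : ℝ) + 1)).1
      rw [breakPt_succ_rpow hγ]
      have e : breakPt γ (n + 1) - breakPt γ (n + 1 + 1) =
          ((n : ℝ) + 1) ^ (-γ) - ((n : ℝ) + 1 + 1) ^ (-γ) := by
        simp [breakPt]
      rw [e]
      refine le_trans ?_ hb
      calc _ ≤ γ * 2 ^ (-γ - 1) * ((n : ℝ) + 1) ^ (-γ - 1) := by
            gcongr; exact min_le_right _ _
        _ = γ * (2 * ((n : ℝ) + 1)) ^ (-γ - 1) := by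
            rw [Real.mul_rpow (by norm_num) (by positivity)]; ring
        _ ≤ _ := by
            apply mul_le_mul_of_nonneg_left _ hγ.le
            exact Real.rpow_le_rpow_of_nonpos (by positivity) (by linarith [n.cast_nonneg (α := ℝ)])
              (by linarith)

lemma exists_gap_le {γ : ℝ} (hγ : 0 < γ) :
    ∃ C > 0, ∀ n, breakPt γ n - breakPt γ (n + 1) ≤ C * breakPt γ (n + 1) ^ (1 + 1 / γ) := by
  refine ⟨max π (γ * 2 ^ (γ + 1)), lt_max_of_lt_left Real.pi_pos, ?_⟩
  intro n
  cases n with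
  | zero =>
    have h1 : breakPt γ (0 + 1) = 1 := by simp [breakPt]
    have h0 : breakPt γ 0 = π := rfl
    rw [h1, h0, Real.one_rpow, mul_one]
    linarith [le_max_left π (γ * 2 ^ (γ + 1))]
  | succ n =>
    have hb := (rpow_neg_sub_bounds hγ (by positivity : (0 : ℝ) < (n : ℝ) + 1)).2
    rw [breakPt_succ_rpow hγ]
    have e : breakPt γ (n + 1) - breakPt γ (n + 1 + 1) =
        ((n : ℝ) + 1) ^ (-γ) - ((n : ℝ) + 1 + 1) ^ (-γ) := by
      simp [breakPt]
    rw [e]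
    refine hb.trans ?_
    push_cast
    have e2 : (2 : ℝ) ^ (γ + 1) * (2 * ((n : ℝ) + 1)) ^ (-γ - 1) = ((n : ℝ) + 1) ^ (-γ - 1) := by
      rw [Real.mul_rpow (by norm_num) (by positivity), ← mul_assoc,
        ← Real.rpow_add (by norm_num)]
      simp
    calc γ * ((n : ℝ) + 1) ^ (-γ - 1)
        = γ * 2 ^ (γ + 1) * (2 * ((n : ℝ) + 1)) ^ (-γ - 1) := by rw [← e2]; ring
      _ ≤ γ * 2 ^ (γ + 1) * ((n : ℝ) + 1 + 1) ^ (-γ - 1) := by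
          apply mul_le_mul_of_nonneg_left _ (by positivity)
          exact Real.rpow_le_rpow_of_nonpos (by positivity) (by linarith [n.cast_nonneg (α := ℝ)])
            (by linarith)
      _ ≤ _ := by
          gcongr; exact le_max_right _ _

/-! ### The set `{e^{± i n^{-γ}}} ∪ {1}` -/

/-- The set `{e^{± i n^{-γ}} : n ≥ 1} ∪ {1}`. -/
def powSet (γ : ℝ) : Set ℂ :=
  {z : ℂ | ∃ n : ℕ, 1 ≤ n ∧
        (z = Complex.exp (Complex.I * (((n : ℝ) ^ (-γ) : ℝ) : ℂ)) ∨
         z = Complex.exp (-(Complex.I * (((n : ℝ) ^ (-γ) : ℝ) : ℂ))))} ∪ {1}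

lemma cpt_breakPt_mem (γ : ℝ) (k : ℕ) : cpt (breakPt γ (k + 1)) ∈ powSet γ := by
  refine Or.inl ⟨k + 1, by omega, Or.inl ?_⟩
  simp [cpt, breakPt, mul_comm]

lemma cpt_neg_breakPt_mem (γ : ℝ) (k : ℕ) : cpt (-breakPt γ (k + 1)) ∈ powSet γ := by
  refine Or.inl ⟨k + 1, by omega, Or.inr ?_⟩
  simp [cpt, breakPt, mul_comm]

lemma cpt_zero_mem (γ : ℝ) : cpt 0 ∈ powSet γ := by
  refine Or.inr ?_
  simp [cpt]

lemma exists_cpt_of_mem_powSet {γ : ℝ} (hγ : 0 < γ) {z : ℂ} (hz : z ∈ powSet γ) :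
    ∃ x : ℝ, |x| ≤ π ∧ z = cpt x ∧ cpt (-x) ∈ powSet γ ∧
      (|x| = 0 ∨ ∃ k, |x| = breakPt γ (k + 1)) := by
  rcases hz with ⟨n, hn, h⟩ | h
  · obtain ⟨k, rfl⟩ : ∃ k, n = k + 1 := ⟨n - 1, by omega⟩
    have habs := abs_of_pos (breakPt_pos γ (k + 1))
    have hle := breakPt_le_pi hγ (k + 1)
    rcases h with h | h
    · refine ⟨breakPt γ (k + 1), by rwa [habs], ?_, cpt_neg_breakPt_mem γ k, Or.inr ⟨k, habs⟩⟩
      rw [h]; simp [cpt, breakPt, mul_comm]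
    · refine ⟨-breakPt γ (k + 1), by rwa [abs_neg, habs], ?_, ?_,
        Or.inr ⟨k, by rw [abs_neg, habs]⟩⟩
      · rw [h]; simp [cpt, breakPt, mul_comm]
      · rw [neg_neg]; exact cpt_breakPt_mem γ k
  · refine ⟨0, by simp [Real.pi_pos.le], ?_, by rw [neg_zero]; exact cpt_zero_mem γ, by simp⟩
    rw [mem_singleton_iff.mp h]; simp [cpt]

lemma dE_cpt_le {E : Set ℂ} {x y : ℝ} (h : cpt y ∈ E) : dE E (cpt x) ≤ |x - y| :=
  (Metric.infDist_le_dist_of_mem h).trans ((dist_eq_norm _ _).trans_le (norm_cpt_sub_cpt_le x y))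

lemma dE_cpt_neg_le {γ : ℝ} (hγ : 0 < γ) (x : ℝ) :
    dE (powSet γ) (cpt x) ≤ dE (powSet γ) (cpt (-x)) := by
  refine (Metric.le_infDist ⟨_, cpt_zero_mem γ⟩).2 fun z hz => ?_
  obtain ⟨y, -, rfl, hy, -⟩ := exists_cpt_of_mem_powSet hγ hz
  refine (Metric.infDist_le_dist_of_mem hy).trans (le_of_eq ?_)
  rw [dist_eq_norm, dist_eq_norm, norm_cpt_sub_cpt, norm_cpt_sub_cpt]
  congr 1
  rw [← abs_neg, ← Real.sin_neg]
  congr 2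
  ring

lemma dE_cpt_neg {γ : ℝ} (hγ : 0 < γ) (x : ℝ) :
    dE (powSet γ) (cpt (-x)) = dE (powSet γ) (cpt x) :=
  le_antisymm (by simpa using dE_cpt_neg_le hγ (-x)) (dE_cpt_neg_le hγ x)

lemma dE_cpt_abs {γ : ℝ} (hγ : 0 < γ) (x : ℝ) :
    dE (powSet γ) (cpt |x|) = dE (powSet γ) (cpt x) := by
  rcases abs_choice x with h | h <;> rw [h]
  exact dE_cpt_neg hγ x

lemma le_dE_cpt {γ : ℝ} (hγ : 0 < γ) {n : ℕ} {s : ℝ}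
    (hs : s ∈ Ioo (breakPt γ (n + 1)) (breakPt γ n)) :
    2 / π * min (s - breakPt γ (n + 1)) (breakPt γ n - s) ≤ dE (powSet γ) (cpt s) := by
  refine (Metric.le_infDist ⟨_, cpt_zero_mem γ⟩).2 fun z hz => ?_
  obtain ⟨x, hx, rfl, -, hx'⟩ := exists_cpt_of_mem_powSet hγ hz
  have hs0 : 0 < s := (breakPt_pos γ _).trans hs.1
  have hsπ : |s| ≤ π := by rw [abs_of_pos hs0]; exact hs.2.le.trans (breakPt_le_pi hγ n)
  rw [dist_eq_norm]
  refine le_trans ?_ (abs_abs_sub_abs_le_norm hsπ hx)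
  rw [abs_of_pos hs0]
  gcongr
  have hlow : |x| ≤ breakPt γ (n + 1) →
      min (s - breakPt γ (n + 1)) (breakPt γ n - s) ≤ |(s - |x|)| := fun h =>
    (min_le_left _ _).trans (le_trans (by linarith) (le_abs_self _))
  rcases hx' with h | ⟨k, h⟩
  · exact hlow (h ▸ (breakPt_pos γ _).le)
  · rcases le_or_gt n k with hk | hk
    · exact hlow (h ▸ antitone_breakPt hγ (by omega))
    · have := antitone_breakPt hγ (by omega : k + 1 ≤ n)
      exact (min_le_right _ _).trans (le_trans (by linarith) (neg_le_abs _))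

lemma not_kSet_powSet {γ : ℝ} (hγ : 0 < γ) : ¬ KSet (powSet γ) := by
  rintro ⟨c, hc, h⟩
  obtain ⟨C, hC, hgap⟩ := exists_gap_le hγ
  have hlim : Filter.Tendsto (fun n => C * breakPt γ n ^ (1 / γ)) Filter.atTop (nhds 0) := by
    have := ((tendsto_breakPt hγ).rpow_const (p := 1 / γ) (Or.inr (by positivity))).const_mul C
    rwa [Real.zero_rpow (by positivity), mul_zero] at this
  obtain ⟨N, hN⟩ := (hlim.eventually_lt_const hc).exists
  set β := breakPt γ N with hβ
  have hβ0 : 0 < β := breakPt_pos γ N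
  have hle : arcSup (powSet γ) 0 β ≤ C * β ^ (1 + 1 / γ) := by
    refine csSup_le ((nonempty_Ioc.mpr hβ0).image _) ?_
    rintro _ ⟨θ, hθ, rfl⟩
    obtain ⟨n, hn, hθn⟩ := exists_mem_Ioc_breakPt hγ hθ.1 hθ.2
    calc dE (powSet γ) (cpt θ) ≤ |θ - breakPt γ (n + 1)| := dE_cpt_le (cpt_breakPt_mem γ n)
      _ = θ - breakPt γ (n + 1) := abs_of_pos (by linarith [hθn.1])
      _ ≤ breakPt γ n - breakPt γ (n + 1) := by linarith [hθn.2]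
      _ ≤ C * breakPt γ (n + 1) ^ (1 + 1 / γ) := hgap n
      _ ≤ C * β ^ (1 + 1 / γ) := by
        have h1 := (breakPt_pos γ (n + 1)).le
        have h2 : breakPt γ (n + 1) ≤ β := antitone_breakPt hγ (by omega)
        gcongr
  have h1 := h 0 β hβ0 (by linarith [breakPt_le_pi hγ N, Real.pi_pos])
  rw [sub_zero] at h1
  have h2 := h1.trans hle
  rw [Real.rpow_add hβ0, Real.rpow_one] at h2
  have h3 : β * (C * β ^ (1 / γ)) < β * c := mul_lt_mul_of_pos_left hN hβ0
  linarith

lemma lintegral_gap_le {γ ε τ t : ℝ} (hγ : 0 < γ) (hε0 : 0 < ε) (hε : ε < 1) (hτ : 0 < τ) (n : ℕ) :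
    ∫⁻ s in Ioc (breakPt γ (n + 1)) (breakPt γ n),
        ENNReal.ofReal (dE (powSet γ) (cpt s) ^ (-ε) * (τ ^ 2 + (s - t) ^ 2)⁻¹) ≤
      ENNReal.ofReal ((2 / π) ^ (-ε) * (2 * ((1 + 2 * 9 / (1 - ε)) *
        (τ ^ (-ε) + (breakPt γ n - breakPt γ (n + 1)) ^ (-ε))))) *
      ∫⁻ s in Ioc (breakPt γ (n + 1)) (breakPt γ n), ENNReal.ofReal ((τ ^ 2 + (s - t) ^ 2)⁻¹) := by
  set p := breakPt γ (n + 1)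
  set q := breakPt γ n
  have hpq : p < q := breakPt_succ_lt hγ n
  have hℓ : 0 < q - p := by linarith
  set K : ℝ → ℝ := fun s => (τ ^ 2 + (s - t) ^ 2)⁻¹ with hK
  have hKm : Measurable K := by fun_prop
  have hK0 : ∀ s, 0 ≤ K s := fun s => by positivity
  have hKd : ∀ s s', |s - s'| ≤ 2 * τ → K s ≤ 9 * K s' := by
    intro s s' h
    have h2 : (s - s') ^ 2 ≤ (2 * τ) ^ 2 := sq_le_sq' (by linarith [(abs_le.mp h).1]) (abs_le.mp h).2
    simp only [hK]
    rw [← div_eq_mul_inv, inv_eq_one_div, div_le_div_iff₀ (by positivity) (by positivity)]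
    nlinarith [sq_nonneg (s - t - (s - s')), sq_nonneg (s - t + (s - s'))]
  have hp := lintegral_rpow_mul_kernel_le (p := p) hε0 hε hτ hℓ (J := Ioc p q) measurableSet_Ioc
    hKm hK0 (by norm_num) hKd (fun ρ h0 h1 => by
      calc ENNReal.ofReal ρ = volume (Ioc p (p + ρ)) := by rw [Real.volume_Ioc]; congr 1; ring
        _ ≤ volume (Ioc p q ∩ {x : ℝ | |x - p| ≤ ρ}) := by
          refine measure_mono fun x hx => ⟨⟨hx.1, by linarith [hx.2]⟩, ?_⟩
          change |x - p| ≤ ρ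
          rw [abs_of_pos (by linarith [hx.1])]; linarith [hx.2])
  have hq := lintegral_rpow_mul_kernel_le (p := q) hε0 hε hτ hℓ (J := Ioc p q) measurableSet_Ioc
    hKm hK0 (by norm_num) hKd (fun ρ h0 h1 => by
      calc ENNReal.ofReal ρ = volume (Ioc (q - ρ) q) := by rw [Real.volume_Ioc]; congr 1; ring
        _ ≤ volume (Ioc p q ∩ {x : ℝ | |x - q| ≤ ρ}) := by
          refine measure_mono fun x hx => ⟨⟨by linarith [hx.1], hx.2⟩, ?_⟩
          change |x - q| ≤ ρ
          rw [abs_of_nonpos (by linarith [hx.2])]; linarith [hx.1])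
  set M := (1 + 2 * 9 / (1 - ε)) * (τ ^ (-ε) + (q - p) ^ (-ε)) with hM
  have hM0 : 0 ≤ M := by
    have : 0 < 1 - ε := by linarith
    positivity
  have hD0 : 0 ≤ (2 / π) ^ (-ε) := by positivity
  calc ∫⁻ s in Ioc p q, ENNReal.ofReal (dE (powSet γ) (cpt s) ^ (-ε) * K s)
      = ∫⁻ s in Ioo p q, ENNReal.ofReal (dE (powSet γ) (cpt s) ^ (-ε) * K s) :=
        setLIntegral_congr Ioo_ae_eq_Ioc.symm
    _ ≤ ∫⁻ s in Ioo p q, ENNReal.ofReal ((2 / π) ^ (-ε)) *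
          (ENNReal.ofReal (|s - p| ^ (-ε) * K s) + ENNReal.ofReal (|s - q| ^ (-ε) * K s)) := by
        refine setLIntegral_mono' measurableSet_Ioo fun s hs => ?_
        have h1 : 0 < s - p := by linarith [hs.1]
        have h2 : 0 < q - s := by linarith [hs.2]
        have hKs := hK0 s
        rw [← ENNReal.ofReal_add (by positivity) (by positivity), ← ENNReal.ofReal_mul hD0]
        apply ENNReal.ofReal_le_ofReal
        rw [← add_mul, ← mul_assoc]
        apply mul_le_mul_of_nonneg_right _ hKs
        have hm : 0 < min (s - p) (q - s) := lt_min h1 h2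
        calc dE (powSet γ) (cpt s) ^ (-ε) ≤ (2 / π * min (s - p) (q - s)) ^ (-ε) :=
              Real.rpow_le_rpow_of_nonpos (by positivity) (le_dE_cpt hγ hs) (by linarith)
          _ = (2 / π) ^ (-ε) * min (s - p) (q - s) ^ (-ε) :=
              Real.mul_rpow (by positivity) hm.le
          _ ≤ _ := by
              gcongr
              rw [abs_of_pos h1, abs_sub_comm, abs_of_pos h2]
              have e1 : 0 ≤ (s - p) ^ (-ε) := by positivity
              have e2 : 0 ≤ (q - s) ^ (-ε) := by positivity
              rcases min_choice (s - p) (q - s) with h | h <;> rw [h] <;> linarith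
    _ ≤ ∫⁻ s in Ioc p q, ENNReal.ofReal ((2 / π) ^ (-ε)) *
          (ENNReal.ofReal (|s - p| ^ (-ε) * K s) + ENNReal.ofReal (|s - q| ^ (-ε) * K s)) :=
        lintegral_mono_set Ioo_subset_Ioc_self
    _ = ENNReal.ofReal ((2 / π) ^ (-ε)) * ((∫⁻ s in Ioc p q, ENNReal.ofReal (|s - p| ^ (-ε) * K s)) +
          ∫⁻ s in Ioc p q, ENNReal.ofReal (|s - q| ^ (-ε) * K s)) := by
        rw [lintegral_const_mul _ (by fun_prop), lintegral_add_left (by fun_prop)]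
    _ ≤ ENNReal.ofReal ((2 / π) ^ (-ε)) * (ENNReal.ofReal M * (∫⁻ s in Ioc p q, ENNReal.ofReal (K s)) +
          ENNReal.ofReal M * ∫⁻ s in Ioc p q, ENNReal.ofReal (K s)) := by
        gcongr
    _ = _ := by
        rw [← add_mul, ← ENNReal.ofReal_add hM0 hM0, ← mul_assoc, ← ENNReal.ofReal_mul hD0, two_mul]

lemma exists_lintegral_dE_le {γ ε : ℝ} (hγ : 0 < γ) (hε0 : 0 < ε) (hε : ε < 1)
    (hεγ : (1 + 1 / γ) * ε = 1 / 2) :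
    ∃ C > 0, ∀ τ t, 0 < τ → τ ≤ t →
      ∫⁻ s in Ioc 0 π, ENNReal.ofReal (dE (powSet γ) (cpt s) ^ (-ε) * (τ ^ 2 + (s - t) ^ 2)⁻¹) ≤
        ENNReal.ofReal (C * (τ ^ (-ε) + t ^ (-(1 / 2) : ℝ)) / τ) := by
  obtain ⟨c, hc, hgap⟩ := exists_le_gap hγ
  have h1ε : 0 < 1 - ε := by linarith
  set D := (2 / π) ^ (-ε) * (2 * (1 + 2 * 9 / (1 - ε))) with hD
  have hD0 : 0 < D := by positivity
  have hcε : 0 < c ^ (-ε) := by positivity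
  refine ⟨D * (4 + c ^ (-ε) * 20), by positivity, fun τ t hτ hτt => ?_⟩
  have ht : 0 < t := hτ.trans_le hτt
  set K : ℝ → ℝ := fun s => (τ ^ 2 + (s - t) ^ 2)⁻¹ with hK
  have hKm : Measurable K := by fun_prop
  have hK0 : ∀ s, 0 ≤ K s := fun s => by positivity
  set J : ℕ → Set ℝ := fun n => Ioc (breakPt γ (n + 1)) (breakPt γ n) with hJ
  have hJm : ∀ n, MeasurableSet (J n) := fun n => measurableSet_Ioc
  have hJd : Pairwise (Function.onFun Disjoint J) := (antitone_breakPt hγ).pairwise_disjoint_on_Ioc_succ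
  have hJU : ⋃ n, J n = Ioc 0 π := iUnion_Ioc_breakPt hγ
  set F : ℝ → ENNReal := fun s => ENNReal.ofReal (D * τ ^ (-ε)) * ENNReal.ofReal (K s) +
    ENNReal.ofReal (D * c ^ (-ε)) * ENNReal.ofReal (s ^ (-(1 / 2) : ℝ) * K s) with hF
  have hgapF : ∀ n, ∫⁻ s in J n, ENNReal.ofReal (dE (powSet γ) (cpt s) ^ (-ε) * K s) ≤
      ∫⁻ s in J n, F s := by
    intro n
    refine (lintegral_gap_le hγ hε0 hε hτ n).trans ?_
    rw [← lintegral_const_mul _ (by fun_prop)]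
    refine setLIntegral_mono' (hJm n) fun s hs => ?_
    have hs0 : 0 < s := (breakPt_pos γ _).trans hs.1
    have hKs := hK0 s
    have hd : 0 < breakPt γ n - breakPt γ (n + 1) := by linarith [breakPt_succ_lt hγ n]
    have hle : (breakPt γ n - breakPt γ (n + 1)) ^ (-ε) ≤ c ^ (-ε) * s ^ (-(1 / 2) : ℝ) := by
      calc (breakPt γ n - breakPt γ (n + 1)) ^ (-ε) ≤ (c * s ^ (1 + 1 / γ)) ^ (-ε) := by
            refine Real.rpow_le_rpow_of_nonpos (by positivity) (le_trans ?_ (hgap n)) (by linarith)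
            gcongr
            exact hs.2
        _ = _ := by
            rw [Real.mul_rpow hc.le (by positivity), ← Real.rpow_mul hs0.le, mul_neg, hεγ]
    simp only [hF]
    rw [← ENNReal.ofReal_mul (by positivity), ← ENNReal.ofReal_mul (by positivity),
      ← ENNReal.ofReal_mul (by positivity), ← ENNReal.ofReal_add (by positivity) (by positivity)]
    apply ENNReal.ofReal_le_ofReal
    calc _ = D * (τ ^ (-ε) + (breakPt γ n - breakPt γ (n + 1)) ^ (-ε)) * K s := by
          rw [hD]; ring
      _ ≤ D * (τ ^ (-ε) + c ^ (-ε) * s ^ (-(1 / 2) : ℝ)) * K s := by gcongr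
      _ = _ := by ring
  calc ∫⁻ s in Ioc 0 π, ENNReal.ofReal (dE (powSet γ) (cpt s) ^ (-ε) * K s)
      ≤ ∑' n, ∫⁻ s in J n, ENNReal.ofReal (dE (powSet γ) (cpt s) ^ (-ε) * K s) := by
        rw [← hJU]; exact lintegral_iUnion_le _ _
    _ ≤ ∑' n, ∫⁻ s in J n, F s := ENNReal.tsum_le_tsum hgapF
    _ = ∫⁻ s in Ioc 0 π, F s := by rw [← lintegral_iUnion hJm hJd, hJU]
    _ = ENNReal.ofReal (D * τ ^ (-ε)) * (∫⁻ s in Ioc 0 π, ENNReal.ofReal (K s)) +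
        ENNReal.ofReal (D * c ^ (-ε)) *
          ∫⁻ s in Ioc 0 π, ENNReal.ofReal (s ^ (-(1 / 2) : ℝ) * K s) := by
        rw [hF, lintegral_add_left (by fun_prop), lintegral_const_mul _ (by fun_prop),
          lintegral_const_mul _ (by fun_prop)]
    _ ≤ ENNReal.ofReal (D * τ ^ (-ε)) * ENNReal.ofReal (π / τ) +
        ENNReal.ofReal (D * c ^ (-ε)) * ENNReal.ofReal (20 * t ^ (-(1 / 2) : ℝ) / τ) := by
        gcongr
        · exact (setLIntegral_le_lintegral _ _).trans (lintegral_kernel τ t hτ).le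
        · exact lintegral_rpow_half_kernel_le hτ hτt
    _ = ENNReal.ofReal (D * τ ^ (-ε) * (π / τ) +
          D * c ^ (-ε) * (20 * t ^ (-(1 / 2) : ℝ) / τ)) := by
        rw [← ENNReal.ofReal_mul (by positivity), ← ENNReal.ofReal_mul (by positivity),
          ← ENNReal.ofReal_add (by positivity) (by positivity)]
    _ ≤ _ := by
        apply ENNReal.ofReal_le_ofReal
        have e1 : D * τ ^ (-ε) * (π / τ) ≤ D * τ ^ (-ε) * (4 / τ) := by
          gcongr; exact Real.pi_le_four
        have e2 : 0 ≤ D * 4 * t ^ (-(1 / 2) : ℝ) / τ := by positivity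
        have e3 : 0 ≤ D * (c ^ (-ε) * 20) * τ ^ (-ε) / τ := by positivity
        calc _ ≤ D * τ ^ (-ε) * (4 / τ) + D * c ^ (-ε) * (20 * t ^ (-(1 / 2) : ℝ) / τ) +
              D * 4 * t ^ (-(1 / 2) : ℝ) / τ + D * (c ^ (-ε) * 20) * τ ^ (-ε) / τ := by linarith
          _ = _ := by ring

lemma log_sq_div_le {ε τ δ N x : ℝ} (hε : 0 < ε) (hτ : 0 < τ) (hδ : 0 ≤ δ) (hδτ : δ ≤ τ)
    (h1 : 2 / π * τ ≤ N) (h2 : 2 / π * |x| ≤ N) :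
    Real.log (τ / δ) ^ 2 / N ^ 2 ≤
      (4 / ε ^ 2 * (π ^ 2 / 2) * τ ^ ε) * (δ ^ (-ε) * (τ ^ 2 + x ^ 2)⁻¹) := by
  rcases hδ.eq_or_lt with rfl | hδ0
  · rw [div_zero, Real.log_zero, zero_pow two_ne_zero, zero_div]
    positivity
  have hN : 0 < N := lt_of_lt_of_le (by positivity) h1
  have hr : 1 ≤ τ / δ := (one_le_div hδ0).2 hδτ
  have hlog : Real.log (τ / δ) ^ 2 ≤ 4 / ε ^ 2 * (τ ^ ε * δ ^ (-ε)) := by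
    have h := Real.log_le_rpow_div (by positivity : 0 ≤ τ / δ) (half_pos hε)
    calc Real.log (τ / δ) ^ 2 ≤ ((τ / δ) ^ (ε / 2) / (ε / 2)) ^ 2 :=
          pow_le_pow_left₀ (Real.log_nonneg hr) h 2
      _ = 4 / ε ^ 2 * ((τ / δ) ^ (ε / 2)) ^ 2 := by field_simp; ring
      _ = 4 / ε ^ 2 * (τ ^ ε * δ ^ (-ε)) := by
          rw [← Real.rpow_mul_natCast (by positivity), Nat.cast_two, div_mul_cancel₀ _ two_ne_zero,
            Real.div_rpow hτ.le hδ, Real.rpow_neg hδ, ← div_eq_mul_inv]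
  have hker : (N ^ 2)⁻¹ ≤ π ^ 2 / 2 * (τ ^ 2 + x ^ 2)⁻¹ := by
    have e1 : τ ≤ π / 2 * N := by
      rw [div_mul_eq_mul_div, div_le_iff₀ Real.pi_pos] at h1; linarith
    have e2 : |x| ≤ π / 2 * N := by
      rw [div_mul_eq_mul_div, div_le_iff₀ Real.pi_pos] at h2; linarith
    have e3 : τ ^ 2 ≤ (π / 2 * N) ^ 2 := pow_le_pow_left₀ hτ.le e1 2
    have e4 : x ^ 2 ≤ (π / 2 * N) ^ 2 := by
      rw [← sq_abs]; exact pow_le_pow_left₀ (abs_nonneg x) e2 2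
    rw [← div_eq_mul_inv, inv_eq_one_div, div_le_div_iff₀ (by positivity) (by positivity)]
    nlinarith
  calc Real.log (τ / δ) ^ 2 / N ^ 2 = Real.log (τ / δ) ^ 2 * (N ^ 2)⁻¹ := div_eq_mul_inv _ _
    _ ≤ (4 / ε ^ 2 * (τ ^ ε * δ ^ (-ε))) * (π ^ 2 / 2 * (τ ^ 2 + x ^ 2)⁻¹) := by gcongr
    _ = _ := by ring

lemma rpow_neg_half_le_rpow_dE {γ : ℝ} (hγ : 0 < γ) :
    ∃ B > 0, ∀ ε > 0, (1 + 1 / γ) * ε = 1 / 2 → ∀ t ∈ Ioc 0 π, 0 < dE (powSet γ) (cpt t) →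
      t ^ (-(1 / 2) : ℝ) ≤ B ^ ε * dE (powSet γ) (cpt t) ^ (-ε) := by
  obtain ⟨B, hB, hgap⟩ := exists_gap_le hγ
  refine ⟨B, hB, fun ε hε hεγ t ht hτ => ?_⟩
  have ht0 : 0 < t := ht.1
  obtain ⟨n, -, hn⟩ := exists_mem_Ioc_breakPt hγ (N := 0) ht.1 ht.2
  have hle : dE (powSet γ) (cpt t) ≤ B * t ^ (1 + 1 / γ) := by
    calc dE (powSet γ) (cpt t) ≤ |t - breakPt γ (n + 1)| := dE_cpt_le (cpt_breakPt_mem γ n)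
      _ = t - breakPt γ (n + 1) := abs_of_pos (by linarith [hn.1])
      _ ≤ breakPt γ n - breakPt γ (n + 1) := by linarith [hn.2]
      _ ≤ B * breakPt γ (n + 1) ^ (1 + 1 / γ) := hgap n
      _ ≤ B * t ^ (1 + 1 / γ) := by
        have h1 := (breakPt_pos γ (n + 1)).le
        have h2 := hn.1.le
        gcongr
  have h := Real.rpow_le_rpow_of_nonpos hτ hle (neg_nonpos.2 hε.le)
  rw [Real.mul_rpow hB.le (by positivity), ← Real.rpow_mul ht0.le, mul_neg, hεγ,
    Real.rpow_neg hB.le] at h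
  calc t ^ (-(1 / 2) : ℝ) = B ^ ε * ((B ^ ε)⁻¹ * t ^ (-(1 / 2) : ℝ)) := by
        field_simp
    _ ≤ _ := by gcongr

lemma l2Set_powSet {γ : ℝ} (hγ : 0 < γ) : L2Set (powSet γ) := by
  set ε := γ / (2 * (γ + 1)) with hεdef
  have hε0 : 0 < ε := by positivity
  have hε1 : ε < 1 := by
    rw [hεdef, div_lt_one (by positivity)]; linarith
  have hεγ : (1 + 1 / γ) * ε = 1 / 2 := by
    rw [hεdef]; field_simp
  obtain ⟨C, hC, hint⟩ := exists_lintegral_dE_le hγ hε0 hε1 hεγ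
  obtain ⟨B, hB, hBt⟩ := rpow_neg_half_le_rpow_dE hγ
  set L := 4 / ε ^ 2 * (π ^ 2 / 2) with hL
  have hL0 : 0 < L := by positivity
  refine ⟨L * 2 * (C * (1 + B ^ ε)), by positivity, fun ζ hζ => ?_⟩
  obtain ⟨φ, hφ, rfl⟩ := exists_cpt_of_mem_circleT hζ.1
  set δ : ℂ → ℝ := dE (powSet γ) with hδ
  have hδ0 : ∀ z, 0 ≤ δ z := fun z => Metric.infDist_nonneg
  have hδc : Continuous fun θ => δ (cpt θ) :=
    (Metric.continuous_infDist_pt _).comp continuous_cpt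
  set τ := δ (cpt φ) with hτdef
  rcases (hδ0 (cpt φ)).eq_or_lt with h0 | hτ
  · rw [← hτdef] at h0
    simp [circIntOn, ← h0]
  rw [← hτdef] at hτ
  set t := |φ| with ht
  have hτt : τ ≤ t := by simpa using dE_cpt_le (x := φ) (cpt_zero_mem γ)
  have htpos : 0 < t := hτ.trans_le hτt
  have hδt : δ (cpt t) = τ := dE_cpt_abs hγ φ
  have htτ : t ^ (-(1 / 2) : ℝ) ≤ B ^ ε * τ ^ (-ε) := by
    have := hBt ε hε0 hεγ t ⟨htpos, hφ⟩ (by rw [hδt]; exact hτ)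
    rwa [hδt] at this
  set G : ℝ → ENNReal := (Ioc 0 π).indicator
    (fun s => ENNReal.ofReal (δ (cpt s) ^ (-ε) * (τ ^ 2 + (s - t) ^ 2)⁻¹)) with hG
  have hGm : Measurable G := by
    refine Measurable.indicator ?_ measurableSet_Ioc
    have hm : Measurable fun s => δ (cpt s) := hδc.measurable
    exact ENNReal.measurable_ofReal.comp ((hm.pow_const (-ε)).mul (by fun_prop))
  have hGi : ∫⁻ s, G s ≤ ENNReal.ofReal (C * (τ ^ (-ε) + t ^ (-(1 / 2) : ℝ)) / τ) := by
    rw [hG, lintegral_indicator measurableSet_Ioc]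
    exact hint τ t hτ hτt
  set T : Set ℝ := {θ | θ ∈ Ioc 0 (2 * π) ∧ 2 / π * τ ≤ ‖cpt φ - cpt θ‖ ∧ δ (cpt θ) ≤ τ} with hT
  have hTm : MeasurableSet T := by
    have hc := continuous_cpt
    refine measurableSet_Ioc.inter (MeasurableSet.inter ?_ ?_)
    · exact (isClosed_le (f := fun _ : ℝ => 2 / π * τ) (g := fun θ => ‖cpt φ - cpt θ‖)
        continuous_const (continuous_const.sub hc).norm).measurableSet
    · exact (isClosed_le hδc continuous_const).measurableSet
  have hST : {θ ∈ Ioc 0 (2 * π) | cpt θ ∈ GammaSet (powSet γ) (cpt φ)} ⊆ T := by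
    rintro θ ⟨hθ, hΓ, hle⟩
    exact ⟨hθ, not_lt.1 fun h => hΓ.2 (mem_compArc_of_norm_lt h), hle⟩
  set f : ℝ → ℝ := fun θ => Real.log (τ / δ (cpt θ)) ^ 2 / ‖cpt φ - cpt θ‖ ^ 2 with hf
  have hf0 : ∀ θ, 0 ≤ f θ := fun θ => by positivity
  have hpt : ∀ θ ∈ T, ENNReal.ofReal (f θ) ≤
      ENNReal.ofReal (L * τ ^ ε) * (G θ + G (2 * π - θ)) := by
    rintro θ ⟨hθ, hθ1, hθ2⟩
    have key : ∀ s ∈ Ioc 0 π, δ (cpt s) = δ (cpt θ) → 2 / π * |s - t| ≤ ‖cpt φ - cpt θ‖ →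
        ENNReal.ofReal (f θ) ≤ ENNReal.ofReal (L * τ ^ ε) * G s := by
      intro s hs hsθ hst
      rw [hG, indicator_of_mem hs, ← ENNReal.ofReal_mul (by positivity), hsθ]
      exact ENNReal.ofReal_le_ofReal (log_sq_div_le hε0 hτ (hδ0 _) hθ2 hθ1 hst)
    have hdist : ∀ x : ℝ, |x| ≤ π → 2 / π * |(|x| - t)| ≤ ‖cpt φ - cpt x‖ := by
      intro x hx
      rw [abs_sub_comm]
      exact abs_abs_sub_abs_le_norm hφ hx
    rcases le_or_gt θ π with h | h
    · refine (key θ ⟨hθ.1, h⟩ rfl ?_).trans (by gcongr; exact le_self_add)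
      have := hdist θ (by rwa [abs_of_pos hθ.1])
      rwa [abs_of_pos hθ.1] at this
    · rcases hθ.2.eq_or_lt with h2 | h2
      · have hz : δ (cpt θ) = 0 := by
          rw [h2, ← cpt_sub_two_pi, sub_self]
          exact Metric.infDist_zero_of_mem (cpt_zero_mem γ)
        simp [hf, hz]
      · have habs : |θ - 2 * π| = 2 * π - θ := by rw [abs_of_neg (by linarith)]; ring
        refine (key (2 * π - θ) ⟨by linarith, by linarith⟩ ?_ ?_).trans
          (by gcongr; exact le_add_self)
        · rw [← habs, hδ, dE_cpt_abs hγ, cpt_sub_two_pi]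
        · have := hdist (θ - 2 * π) (by rw [habs]; linarith)
          rwa [habs, cpt_sub_two_pi] at this
  change ∫ θ in {θ ∈ Ioc 0 (2 * π) | cpt θ ∈ GammaSet (powSet γ) (cpt φ)}, f θ ≤ _
  refine (Real.le_norm_self _).trans ((norm_integral_le_lintegral_norm _).trans ?_)
  refine ENNReal.toReal_le_of_le_ofReal (by positivity) ?_
  calc ∫⁻ θ in {θ ∈ Ioc 0 (2 * π) | cpt θ ∈ GammaSet (powSet γ) (cpt φ)}, ENNReal.ofReal ‖f θ‖
      ≤ ∫⁻ θ in T, ENNReal.ofReal ‖f θ‖ := lintegral_mono_set hST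
    _ ≤ ∫⁻ θ in T, ENNReal.ofReal (L * τ ^ ε) * (G θ + G (2 * π - θ)) := by
        refine setLIntegral_mono' hTm fun θ hθ => ?_
        rw [Real.norm_of_nonneg (hf0 θ)]
        exact hpt θ hθ
    _ ≤ ∫⁻ θ, ENNReal.ofReal (L * τ ^ ε) * (G θ + G (2 * π - θ)) := setLIntegral_le_lintegral _ _
    _ = ENNReal.ofReal (L * τ ^ ε) * (2 * ∫⁻ s, G s) := by
        rw [lintegral_const_mul _ (by fun_prop), lintegral_add_left hGm,
          lintegral_sub_left_eq_self G (2 * π), two_mul]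
    _ ≤ ENNReal.ofReal (L * τ ^ ε) *
          (2 * ENNReal.ofReal (C * (τ ^ (-ε) + B ^ ε * τ ^ (-ε)) / τ)) := by
        gcongr
        refine hGi.trans (ENNReal.ofReal_le_ofReal ?_)
        gcongr
    _ = ENNReal.ofReal (L * 2 * (C * (1 + B ^ ε)) / τ) := by
        rw [← ENNReal.ofReal_ofNat, ← ENNReal.ofReal_mul (by norm_num),
          ← ENNReal.ofReal_mul (by positivity)]
        congr 1
        rw [Real.rpow_neg hτ.le]
        field_simp

/-- `E = {e^{± i n^{-γ}} : n ≥ 1} ∪ {1}` is an `𝓛₂`-set but not a `𝒦`-set. -/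
theorem statement10 (γ : ℝ) (hγ : 0 < γ) :
    L2Set ({z : ℂ | ∃ n : ℕ, 1 ≤ n ∧
        (z = Complex.exp (Complex.I * (((n : ℝ) ^ (-γ) : ℝ) : ℂ)) ∨
         z = Complex.exp (-(Complex.I * (((n : ℝ) ^ (-γ) : ℝ) : ℂ))))} ∪ {1}) ∧
    ¬ KSet ({z : ℂ | ∃ n : ℕ, 1 ≤ n ∧
        (z = Complex.exp (Complex.I * (((n : ℝ) ^ (-γ) : ℝ) : ℂ)) ∨
         z = Complex.exp (-(Complex.I * (((n : ℝ) ^ (-γ) : ℝ) : ℂ))))} ∪ {1}) := by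
  exact ⟨l2Set_powSet hγ, not_kSet_powSet hγ⟩
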